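/- Let M be a transitive model of ZFC with o(M) = κ, where κ is an unfoldable cardinal. Then for every S ⊆ M and every ordinal α, the structure (E_{(M,∈,S)}, ≺_e) contains a well-founded end elementary extension of (M,∈,S) of ordinal height ≥ α. -/

import Mathlib

open FirstOrder Cardinal

/-- The language of set theory with one binary relation symbol (membership)
and one unary predicate symbol (for a distinguished subset). -/
def LSP : FirstOrder.Language where
  Functions := fun _ => Empty
  Relations := fun n =>
    match n with
    | 1 => Unit
    | 2 => Unit
    | _ => Empty

/-- A model of the language of set theory: a carrier together with a
membership relation and the interpretation of the distinguished predicate. -/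
structure SetModel : Type 2 where
  Carrier : Type 1
  mem : Carrier → Carrier → Prop
  pred : Carrier → Prop

/-- The first-order `LSP`-structure attached to a `SetModel`. -/
def SetModel.str (M : SetModel) : LSP.Structure M.Carrier where
  funMap := fun {_} f _ => Empty.elim f
  RelMap := fun {n} =>
    match n with
    | 1 => fun _ v => M.pred (v 0)
    | 2 => fun _ v => M.mem (v 0) (v 1)
    | 0 => fun r _ => Empty.elim r
    | (_ + 3) => fun r _ => Empty.elim r

/-- Satisfaction of a first-order formula with `n` free variables in a `SetModel`. -/
def SetModel.Realize (M : SetModel) {n : ℕ} (φ : LSP.Formula (Fin n))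
    (v : Fin n → M.Carrier) : Prop :=
  letI := M.str
  φ.Realize v

/-- `f : M → N` is an elementary map. -/
def IsElem (M N : SetModel) (f : M.Carrier → N.Carrier) : Prop :=
  ∀ (n : ℕ) (φ : LSP.Formula (Fin n)) (v : Fin n → M.Carrier),
    N.Realize φ (f ∘ v) ↔ M.Realize φ v

/-- `f : M → N` realizes `N` as a (proper) end elementary extension of `M`:
it is elementary, no element of `M` gains new members in `N`, and `N` properly
extends the image of `M`. -/
structure IsEEE (M N : SetModel) (f : M.Carrier → N.Carrier) : Prop where
  elementary : IsElem M N f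
  isEnd : ∀ (a : M.Carrier) (b : N.Carrier), N.mem b (f a) → ∃ b', f b' = b
  proper : ¬ Function.Surjective f

/-- `N` is a (proper) end elementary extension of `M`. -/
def EEE (M N : SetModel) : Prop := ∃ f, IsEEE M N f

/-- Isomorphism of set models. -/
def SMIso (M N : SetModel) : Prop :=
  ∃ e : M.Carrier ≃ N.Carrier,
    (∀ x y, M.mem x y ↔ N.mem (e x) (e y)) ∧ ∀ x, M.pred x ↔ N.pred (e x)

/-- The model `(A, ∈, S)` where `A, S` are collections of ZFC sets and `∈` is
genuine membership. -/
def ZModel (A S : Set ZFSet) : SetModel :=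
  ⟨A, fun x y => (x : ZFSet) ∈ (y : ZFSet), fun x => (x : ZFSet) ∈ S⟩

/-- `(A,∈,SA) ≺ₑ (B,∈,SB)`: the inclusion map is a proper end elementary
extension of concrete (well-founded) models. -/
def ZEEE (A SA B SB : Set ZFSet) : Prop :=
  ∃ h : A ⊆ B, IsEEE (ZModel A SA) (ZModel B SB) (Set.inclusion h)

/-- `R(o) = V_o`: the collection of ZFC sets of rank `< o`. -/
def Vrank (o : Ordinal.{0}) : Set ZFSet := {x | x.rank < o}

/-- Semantic satisfaction of the axioms of ZF⁻ (ZF without power set), with the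
separation and replacement schemas ranging over all first-order formulas of the
language. -/
structure SatZFminus (M : SetModel) : Prop where
  ext : ∀ x y, (∀ z, M.mem z x ↔ M.mem z y) → x = y
  found : ∀ x, (∃ y, M.mem y x) → ∃ y, M.mem y x ∧ ∀ z, M.mem z x → ¬M.mem z y
  pair : ∀ x y, ∃ p, ∀ z, M.mem z p ↔ z = x ∨ z = y
  unionAx : ∀ x, ∃ u, ∀ z, M.mem z u ↔ ∃ y, M.mem y x ∧ M.mem z y
  infinity : ∃ i, (∃ e, M.mem e i ∧ ∀ z, ¬M.mem z e) ∧
    ∀ x, M.mem x i → ∃ s, M.mem s i ∧ ∀ z, M.mem z s ↔ M.mem z x ∨ z = x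
  sep : ∀ (n : ℕ) (φ : LSP.Formula (Fin (n + 1))) (p : Fin n → M.Carrier) (a : M.Carrier),
    ∃ b, ∀ z, M.mem z b ↔ M.mem z a ∧ M.Realize φ (Fin.cons z p)
  repl : ∀ (n : ℕ) (φ : LSP.Formula (Fin (n + 2))) (p : Fin n → M.Carrier) (a : M.Carrier),
    (∀ x, M.mem x a → ∃! y, M.Realize φ (Fin.cons x (Fin.cons y p))) →
    ∃ b, ∀ y, M.mem y b ↔ ∃ x, M.mem x a ∧ M.Realize φ (Fin.cons x (Fin.cons y p))

/-- Semantic satisfaction of the ZF axioms. -/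
structure SatZF (M : SetModel) extends SatZFminus M : Prop where
  power : ∀ x, ∃ p, ∀ z, M.mem z p ↔ ∀ w, M.mem w z → M.mem w x

/-- Semantic satisfaction of the ZFC axioms. -/
structure SatZFC (M : SetModel) extends SatZF M : Prop where
  choice : ∀ x, (∀ y, M.mem y x → ∃ z, M.mem z y) →
    (∀ y y', M.mem y x → M.mem y' x → y ≠ y' → ¬∃ z, M.mem z y ∧ M.mem z y') →
    ∃ c, ∀ y, M.mem y x → ∃! z, M.mem z y ∧ M.mem z c

/-- `κ` is unfoldable: `κ` is inaccessible and for every `S ⊆ R(κ)` and every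
ordinal `α`, `(R(κ),∈,S)` has a well-founded (transitive) proper end elementary
extension of ordinal height at least `α`. -/
def IsUnfoldable (κ : Cardinal.{0}) : Prop :=
  κ.IsInaccessible ∧
    ∀ S : Set ZFSet, S ⊆ Vrank κ.ord → ∀ α : Ordinal.{0},
      ∃ (N : ZFSet) (T : Set ZFSet),
        N.IsTransitive ∧ ZEEE (Vrank κ.ord) S N.toSet T ∧ α ≤ N.rank

/-!
Code into a single predicate on `K = V_κ` the subset `S` and the relation between `x ∈ K` and
`y ∈ M` that `rank x ≤ rank y`. An end elementary extension `N'` of the coded structure decodes to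
a transitive `N ⊆ N'`, and relativizing formulas to the coded domain shows that `N` is an elementary
extension of `M`. Since `M` and `K` have the same height, the coded relation says that every set has
rank at most that of some member of `M`. That rank comparison survives in `N'` because its
recursive clause is first order and `∈` is well-founded on `N'`, so `N` is as tall as `N'`.
-/

instance SetModel.instStructure (M : SetModel) : LSP.Structure M.Carrier := M.str

namespace LSP

open FirstOrder.Language

section Formulas

variable {β : Type} {k n : ℕ}

/-- A free variable, as a term allowed below `k` quantifiers. -/
abbrev free (i : β) : LSP.Term (β ⊕ Fin k) := .var (.inl i)

/-- The atomic formula `s ∈ t`. -/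
def mem (s t : LSP.Term (β ⊕ Fin k)) : LSP.BoundedFormula β k :=
  Relations.boundedFormula₂ (L := LSP) () s t

/-- The atomic formula saying that `t` satisfies the distinguished predicate. -/
def pred (t : LSP.Term (β ⊕ Fin k)) : LSP.BoundedFormula β k :=
  Relations.boundedFormula₁ (L := LSP) () t

/-- The formula `φ(ts)`, usable below `k` quantifiers. -/
def inst (φ : LSP.Formula (Fin n)) (ts : Fin n → LSP.Term (β ⊕ Fin k)) :
    LSP.BoundedFormula β k :=
  (φ.subst ts).relabel id

/-- The relativization of a formula to the class defined by `δ`, with the distinguished predicate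
replaced by `υ`. -/
def relativize (δ υ : LSP.Formula (Fin 1)) :
    {k : ℕ} → LSP.BoundedFormula β k → LSP.BoundedFormula β k
  | _, .falsum => .falsum
  | _, .equal s t => .equal s t
  | _, .rel (l := 0) r _ => r.elim
  | _, .rel (l := 1) _ ts => inst υ ![ts 0]
  | _, .rel (l := 2) _ ts => mem (ts 0) (ts 1)
  | _, .rel (l := _ + 3) r _ => r.elim
  | _, .imp φ ψ => relativize δ υ φ ⟹ relativize δ υ ψ
  | k, .all φ => ∀' (inst δ ![&(Fin.last k)] ⟹ relativize δ υ φ)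

variable {M : SetModel} {v : β → M.Carrier} {xs : Fin k → M.Carrier}

@[simp]
theorem realize_mem {s t : LSP.Term (β ⊕ Fin k)} :
    (mem s t).Realize v xs ↔ M.mem (s.realize (Sum.elim v xs)) (t.realize (Sum.elim v xs)) :=
  BoundedFormula.realize_rel₂

@[simp]
theorem realize_pred {t : LSP.Term (β ⊕ Fin k)} :
    (pred t).Realize v xs ↔ M.pred (t.realize (Sum.elim v xs)) :=
  BoundedFormula.realize_rel₁

@[simp]
theorem realize_inst {φ : LSP.Formula (Fin n)} {ts : Fin n → LSP.Term (β ⊕ Fin k)} :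
    (inst φ ts).Realize v xs ↔ M.Realize φ (Term.realize (Sum.elim v xs) ∘ ts) := by
  simp only [inst, BoundedFormula.realize_relabel, BoundedFormula.realize_subst,
    Subsingleton.elim _ default, SetModel.Realize, Formula.Realize]
  rfl

theorem realize_iff {φ : LSP.Formula (Fin n)} {v : Fin n → M.Carrier} :
    M.Realize φ v ↔ BoundedFormula.Realize φ v default :=
  Iff.rfl

theorem realize_term_comp {M N : SetModel} (f : M.Carrier → N.Carrier) (t : LSP.Term β)
    (v : β → M.Carrier) : t.realize (f ∘ v) = f (t.realize v) := by
  cases t with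
  | var => rfl
  | func g => exact g.elim

@[simp]
theorem comp_vecEmpty {A B : Type*} (f : A → B) : f ∘ ![] = ![] :=
  Matrix.empty_eq _

@[simp]
theorem comp_vecCons {A B : Type*} (f : A → B) (a : A) (as : Fin n → A) :
    f ∘ Matrix.vecCons a as = Matrix.vecCons (f a) (f ∘ as) :=
  Fin.comp_cons ..

theorem realize_relativize {M N : SetModel} {f : M.Carrier → N.Carrier} (hf : f.Injective)
    (hmem : ∀ x y, N.mem (f x) (f y) ↔ M.mem x y) {δ υ : LSP.Formula (Fin 1)}
    (hδ : ∀ y, N.Realize δ ![y] ↔ y ∈ Set.range f) (hυ : ∀ x, N.Realize υ ![f x] ↔ M.pred x)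
    (φ : LSP.BoundedFormula β k) (v : β → M.Carrier) (xs : Fin k → M.Carrier) :
    (relativize δ υ φ).Realize (f ∘ v) (f ∘ xs) ↔ φ.Realize v xs := by
  induction φ with
  | falsum => exact Iff.rfl
  | equal s t =>
    change s.realize _ = t.realize _ ↔ s.realize _ = t.realize _
    rw [← Sum.comp_elim, realize_term_comp, realize_term_comp, hf.eq_iff]
  | @rel _ l r ts =>
    match l, r, ts with
    | 0, r, _ => exact r.elim
    | 1, _, ts =>
      simp only [relativize, realize_inst, ← Sum.comp_elim, comp_vecCons, comp_vecEmpty,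
        realize_term_comp, hυ]
      rfl
    | 2, _, ts =>
      simp only [relativize, realize_mem, ← Sum.comp_elim, realize_term_comp, hmem]
      rfl
    | _ + 3, r, _ => exact r.elim
  | imp φ ψ ihφ ihψ => exact imp_congr (ihφ xs) (ihψ xs)
  | all φ ih =>
    simp only [relativize, BoundedFormula.realize_all, BoundedFormula.realize_imp, realize_inst,
      comp_vecCons, comp_vecEmpty, Function.comp_apply, Term.realize_var, Sum.elim_inr,
      Fin.snoc_last, hδ, Set.forall_mem_range, ← Fin.comp_snoc, ih]

theorem realize_relativize_formula {M N : SetModel} {f : M.Carrier → N.Carrier}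
    (hf : f.Injective) (hmem : ∀ x y, N.mem (f x) (f y) ↔ M.mem x y) {δ υ : LSP.Formula (Fin 1)}
    (hδ : ∀ y, N.Realize δ ![y] ↔ y ∈ Set.range f) (hυ : ∀ x, N.Realize υ ![f x] ↔ M.pred x)
    (φ : LSP.Formula (Fin n)) (v : Fin n → M.Carrier) :
    N.Realize (relativize δ υ φ) (f ∘ v) ↔ M.Realize φ v := by
  rw [realize_iff, Subsingleton.elim default (f ∘ default)]
  exact realize_relativize hf hmem hδ hυ φ v default

end Formulas

/-- `p = {a, b}`, in the variables `p, a, b`. -/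
def unorderedPair : LSP.Formula (Fin 3) :=
  ∀' (mem &0 (free 0) ⇔ (&0 =' free 1 ⊔ &0 =' free 2))

/-- `p = (a, b)`, in the variables `p, a, b`. -/
def orderedPair : LSP.Formula (Fin 3) :=
  ∀' (mem &0 (free 0) ⇔
    (inst unorderedPair ![&0, free 1, free 1] ⊔ inst unorderedPair ![&0, free 1, free 2]))

/-- The relation coded by the pairs in the distinguished predicate. -/
def rankLE : LSP.Formula (Fin 2) :=
  ∃' (pred &0 ⊓ inst orderedPair ![&0, free 0, free 1])

/-- The range of the relation coded by `rankLE`. -/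
def domain : LSP.Formula (Fin 1) :=
  ∃' inst rankLE ![&0, free 0]

/-- The set of those `x` for which `{∅, x}` satisfies the distinguished predicate. -/
def marked : LSP.Formula (Fin 1) :=
  ∃' ∃' (pred &0 ⊓ inst unorderedPair ![&0, &1, free 0] ⊓ ∀' ∼(mem &2 &1))

/-- The sentence expressing `SetModel.IsRankCoded`. -/
def isRankCoded : LSP.Formula (Fin 0) :=
  (∀' ∀' (inst domain ![&0] ⟹ mem &1 &0 ⟹ inst domain ![&1])) ⊓
    (∀' ∀' ∀' (inst rankLE ![&0, &1] ⟹ mem &2 &0 ⟹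
      ∃' (mem &3 &1 ⊓ inst rankLE ![&2, &3]))) ⊓
    ∀' ∃' inst rankLE ![&0, &1]

end LSP

/-- The coded domain of `M` is transitive, the coded relation `rankLE` obeys the recursive clause of
rank comparison, and every element is related to something. -/
structure SetModel.IsRankCoded (M : SetModel) : Prop where
  domain_of_mem : ∀ x y, M.Realize LSP.domain ![x] → M.mem y x → M.Realize LSP.domain ![y]
  exists_rankLE_of_mem : ∀ x y z, M.Realize LSP.rankLE ![x, y] → M.mem z x →
    ∃ w, M.mem w y ∧ M.Realize LSP.rankLE ![z, w]
  exists_rankLE : ∀ x, ∃ y, M.Realize LSP.rankLE ![x, y]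

namespace LSP

variable {M : SetModel}

theorem realize_unorderedPair {p a b : M.Carrier} :
    M.Realize unorderedPair ![p, a, b] ↔ ∀ q, M.mem q p ↔ q = a ∨ q = b := by
  rw [realize_iff]
  simp [unorderedPair, Fin.snoc]

theorem realize_orderedPair {p a b : M.Carrier} :
    M.Realize orderedPair ![p, a, b] ↔ ∀ q, M.mem q p ↔
      M.Realize unorderedPair ![q, a, a] ∨ M.Realize unorderedPair ![q, a, b] := by
  rw [realize_iff]
  simp [orderedPair, Fin.snoc]

theorem realize_rankLE {x y : M.Carrier} :
    M.Realize rankLE ![x, y] ↔ ∃ p, M.pred p ∧ M.Realize orderedPair ![p, x, y] := by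
  rw [realize_iff]
  simp [rankLE, Fin.snoc]

theorem realize_domain {y : M.Carrier} :
    M.Realize domain ![y] ↔ ∃ x, M.Realize rankLE ![x, y] := by
  rw [realize_iff]
  simp [domain, Fin.snoc]

theorem realize_marked {x : M.Carrier} :
    M.Realize marked ![x] ↔
      ∃ p e, (M.pred p ∧ M.Realize unorderedPair ![p, e, x]) ∧ ∀ q, ¬ M.mem q e := by
  rw [realize_iff]
  simp [marked, Fin.snoc]

theorem realize_isRankCoded {v : Fin 0 → M.Carrier} :
    M.Realize isRankCoded v ↔ M.IsRankCoded := by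
  have : M.Realize isRankCoded v ↔
      ((∀ x y, M.Realize domain ![x] → M.mem y x → M.Realize domain ![y]) ∧
        ∀ x y z, M.Realize rankLE ![x, y] → M.mem z x →
          ∃ w, M.mem w y ∧ M.Realize rankLE ![z, w]) ∧
      ∀ x, ∃ y, M.Realize rankLE ![x, y] := by
    rw [realize_iff]
    simp [isRankCoded, Fin.snoc]
  exact this.trans ⟨fun ⟨⟨h₁, h₂⟩, h₃⟩ => ⟨h₁, h₂, h₃⟩, fun ⟨h₁, h₂, h₃⟩ => ⟨⟨h₁, h₂⟩, h₃⟩⟩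

end LSP

theorem IsElem.isRankCoded {M N : SetModel} {f : M.Carrier → N.Carrier} (hf : IsElem M N f)
    (hM : M.IsRankCoded) : N.IsRankCoded :=
  LSP.realize_isRankCoded.1 ((hf 0 LSP.isRankCoded ![]).2 (LSP.realize_isRankCoded.2 hM))

theorem IsElem.realize_vecCons_one {M N : SetModel} {f : M.Carrier → N.Carrier}
    (hf : IsElem M N f) (φ : LSP.Formula (Fin 1)) (x : M.Carrier) :
    N.Realize φ ![f x] ↔ M.Realize φ ![x] := by
  rw [← hf 1 φ ![x], LSP.comp_vecCons, LSP.comp_vecEmpty]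

/-- The subset of `A` defined by `φ` in `(A, ∈, U)`. -/
def definedSet (A U : Set ZFSet) (φ : LSP.Formula (Fin 1)) : Set ZFSet :=
  {x | ∃ h : x ∈ A, (ZModel A U).Realize φ ![⟨x, h⟩]}

theorem definedSet_subset {A U : Set ZFSet} {φ : LSP.Formula (Fin 1)} : definedSet A U φ ⊆ A :=
  fun _ hx => hx.1

theorem mem_definedSet {A U : Set ZFSet} {φ : LSP.Formula (Fin 1)} (x : A) :
    (x : ZFSet) ∈ definedSet A U φ ↔ (ZModel A U).Realize φ ![x] :=
  ⟨fun h => h.2, fun h => ⟨x.2, h⟩⟩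

theorem realize_relativize_definedSet {A U : Set ZFSet} {δ υ : LSP.Formula (Fin 1)} {n : ℕ}
    (φ : LSP.Formula (Fin n)) (v : Fin n → definedSet A U δ) :
    (ZModel A U).Realize (LSP.relativize δ υ φ) (Set.inclusion definedSet_subset ∘ v) ↔
      (ZModel (definedSet A U δ) (definedSet A U υ)).Realize φ v := by
  exact LSP.realize_relativize_formula (M := ZModel (definedSet A U δ) (definedSet A U υ))
    (N := ZModel A U) (Set.inclusion_injective definedSet_subset) (fun _ _ => Iff.rfl)
    (fun y => (mem_definedSet y).symm.trans
      ⟨fun hy => ⟨⟨y.1, hy⟩, rfl⟩, fun ⟨x, hx⟩ => hx ▸ x.2⟩)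
    (fun x => (mem_definedSet ⟨x.1, x.2.1⟩).symm) φ v

theorem IsElem.inclusion_definedSet {A U B T : Set ZFSet} {h : A ⊆ B}
    (hAB : IsElem (ZModel A U) (ZModel B T) (Set.inclusion h)) (δ υ : LSP.Formula (Fin 1)) :
    ∃ h' : definedSet A U δ ⊆ definedSet B T δ,
      IsElem (ZModel (definedSet A U δ) (definedSet A U υ))
        (ZModel (definedSet B T δ) (definedSet B T υ)) (Set.inclusion h') := by
  have hsub : definedSet A U δ ⊆ definedSet B T δ := fun x ⟨hx, hδ⟩ =>
    ⟨h hx, (hAB.realize_vecCons_one δ ⟨x, hx⟩).2 hδ⟩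
  refine ⟨hsub, fun n φ v => ?_⟩
  calc (ZModel (definedSet B T δ) (definedSet B T υ)).Realize φ (Set.inclusion hsub ∘ v)
    _ ↔ (ZModel B T).Realize (LSP.relativize δ υ φ)
          (Set.inclusion h ∘ Set.inclusion definedSet_subset ∘ v) :=
        (realize_relativize_definedSet φ _).symm
    _ ↔ (ZModel A U).Realize (LSP.relativize δ υ φ) (Set.inclusion definedSet_subset ∘ v) :=
        hAB n _ _
    _ ↔ (ZModel (definedSet A U δ) (definedSet A U υ)).Realize φ v :=
        realize_relativize_definedSet φ v

section TransitiveClass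

variable {K U : Set ZFSet}

/-- A transitive class containing `∅` and closed under unordered pairs. -/
structure IsPairingClass (K : Set ZFSet) : Prop where
  mem_trans : ∀ {x y}, x ∈ y → y ∈ K → x ∈ K
  empty_mem : ∅ ∈ K
  unorderedPair_mem : ∀ {x y}, x ∈ K → y ∈ K → ({x, y} : ZFSet) ∈ K

theorem IsPairingClass.pair_mem (hK : IsPairingClass K) {x y : ZFSet} (hx : x ∈ K) (hy : y ∈ K) :
    ZFSet.pair x y ∈ K := by
  have hx' := hK.unorderedPair_mem hx hx
  rw [ZFSet.pair_eq_singleton] at hx'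
  exact hK.unorderedPair_mem hx' (hK.unorderedPair_mem hx hy)

theorem isPairingClass_vrank {o : Ordinal} (ho : Order.IsSuccLimit o) :
    IsPairingClass (Vrank o) where
  mem_trans hxy hy := (ZFSet.rank_lt_of_mem hxy).trans hy
  empty_mem := ZFSet.rank_empty.trans_lt ho.bot_lt
  unorderedPair_mem hx hy :=
    (ZFSet.rank_pair _ _).trans_lt (max_lt (ho.succ_lt hx) (ho.succ_lt hy))

theorem forall_mem_iff_eq (hK : ∀ {x y}, x ∈ y → y ∈ K → x ∈ K) {p q : ZFSet} (hp : p ∈ K)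
    (hq : q ∈ K) : (∀ z : K, (z : ZFSet) ∈ p ↔ (z : ZFSet) ∈ q) ↔ p = q :=
  ⟨fun h => ZFSet.ext fun z => ⟨fun hz => (h ⟨z, hK hz hp⟩).1 hz,
    fun hz => (h ⟨z, hK hz hq⟩).2 hz⟩, fun h _ => by rw [h]⟩

namespace LSP

theorem realize_unorderedPair_zModel (hK : IsPairingClass K) {p a b : K} :
    (ZModel K U).Realize unorderedPair ![p, a, b] ↔ (p : ZFSet) = {(a : ZFSet), (b : ZFSet)} := by
  rw [← forall_mem_iff_eq hK.mem_trans p.2 (hK.unorderedPair_mem a.2 b.2)]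
  simp only [ZFSet.mem_pair, ← Subtype.ext_iff]
  exact realize_unorderedPair

theorem realize_orderedPair_zModel (hK : IsPairingClass K) {p a b : K} :
    (ZModel K U).Realize orderedPair ![p, a, b] ↔ (p : ZFSet) = ZFSet.pair a b := by
  rw [← forall_mem_iff_eq hK.mem_trans p.2 (hK.pair_mem a.2 b.2)]
  have mem_pair_iff (q : ZFSet) : q ∈ ZFSet.pair a b ↔ q = {a.1, a.1} ∨ q = {a.1, b.1} := by
    rw [ZFSet.pair, ZFSet.mem_pair, ZFSet.pair_eq_singleton]
  simp only [mem_pair_iff, ← realize_unorderedPair_zModel (U := U) hK]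
  exact realize_orderedPair

end LSP

end TransitiveClass

/-- The predicate on `K` coding `S` and the relation between `x ∈ K` and `y ∈ M` that
`rank x ≤ rank y`. A set `{∅, s}` is never an ordered pair, since the members of ordered pairs are
nonempty. -/
def rankCode (K M S : Set ZFSet) : Set ZFSet :=
  {p | (∃ x ∈ K, ∃ y ∈ M, x.rank ≤ y.rank ∧ p = ZFSet.pair x y) ∨
    ∃ s ∈ S, p = {∅, s}}

theorem empty_notMem_pair (x y : ZFSet) : ∅ ∉ ZFSet.pair x y := by
  intro h
  obtain h | h := ZFSet.mem_pair.1 h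
  · exact ZFSet.notMem_empty x (h ▸ ZFSet.mem_singleton.2 rfl)
  · exact ZFSet.notMem_empty x (h ▸ ZFSet.mem_pair.2 (.inl rfl))

theorem empty_pair_ne_pair (s x y : ZFSet) : ({∅, s} : ZFSet) ≠ ZFSet.pair x y := fun h =>
  empty_notMem_pair x y (h ▸ ZFSet.mem_pair.2 (.inl rfl))

theorem empty_pair_inj {s t : ZFSet} : ({∅, s} : ZFSet) = {∅, t} ↔ s = t := by
  refine ⟨fun h => ?_, fun h => h ▸ rfl⟩
  have hs := ZFSet.mem_pair.1 (h ▸ ZFSet.mem_pair.2 (.inr rfl) : s ∈ ({∅, t} : ZFSet))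
  have ht := ZFSet.mem_pair.1 (h ▸ ZFSet.mem_pair.2 (.inr rfl) : t ∈ ({∅, s} : ZFSet))
  grind

theorem pair_mem_rankCode {K M S : Set ZFSet} {x y : ZFSet} :
    ZFSet.pair x y ∈ rankCode K M S ↔ x ∈ K ∧ y ∈ M ∧ x.rank ≤ y.rank := by
  constructor
  · rintro (⟨x', hx, y', hy, hle, h⟩ | ⟨s, -, h⟩)
    · obtain ⟨rfl, rfl⟩ := ZFSet.pair_inj.1 h
      exact ⟨hx, hy, hle⟩
    · exact (empty_pair_ne_pair _ _ _ h.symm).elim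
  · exact fun ⟨hx, hy, hle⟩ => .inl ⟨x, hx, y, hy, hle, rfl⟩

theorem empty_pair_mem_rankCode {K M S : Set ZFSet} {s : ZFSet} :
    {∅, s} ∈ rankCode K M S ↔ s ∈ S := by
  constructor
  · rintro (⟨x, -, y, -, -, h⟩ | ⟨t, ht, h⟩)
    · exact (empty_pair_ne_pair _ _ _ h).elim
    · exact empty_pair_inj.1 h ▸ ht
  · exact fun hs => .inr ⟨s, hs, rfl⟩

section RankCode

variable {K M S : Set ZFSet}

theorem rankCode_subset (hK : IsPairingClass K) (hM : M ⊆ K) (hS : S ⊆ K) : rankCode K M S ⊆ K := by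
  rintro _ (⟨x, hx, y, hy, -, rfl⟩ | ⟨s, hs, rfl⟩)
  · exact hK.pair_mem hx (hM hy)
  · exact hK.unorderedPair_mem hK.empty_mem (hS hs)

theorem realize_rankLE_rankCode (hK : IsPairingClass K) {x y : K} :
    (ZModel K (rankCode K M S)).Realize LSP.rankLE ![x, y] ↔
      (y : ZFSet) ∈ M ∧ (x : ZFSet).rank ≤ (y : ZFSet).rank := by
  have h : (∃ p : K, (p : ZFSet) ∈ rankCode K M S ∧ (p : ZFSet) = ZFSet.pair x y) ↔
      (y : ZFSet) ∈ M ∧ (x : ZFSet).rank ≤ (y : ZFSet).rank :=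
    ⟨fun ⟨_, hp, hpxy⟩ => (pair_mem_rankCode.1 (hpxy ▸ hp)).2,
      fun hxy => ⟨⟨_, hK.pair_mem x.2 y.2⟩, pair_mem_rankCode.2 ⟨x.2, hxy⟩, rfl⟩⟩
  simp only [← LSP.realize_orderedPair_zModel (U := rankCode K M S) hK] at h
  exact LSP.realize_rankLE.trans h

theorem definedSet_domain_rankCode (hK : IsPairingClass K) (hM : M ⊆ K) :
    definedSet K (rankCode K M S) LSP.domain = M := by
  ext y
  constructor
  · rintro ⟨hy, h⟩
    obtain ⟨x, hx⟩ := LSP.realize_domain.1 h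
    exact ((realize_rankLE_rankCode hK).1 hx).1
  · exact fun hy => ⟨hM hy, LSP.realize_domain.2
      ⟨⟨y, hM hy⟩, (realize_rankLE_rankCode hK).2 ⟨hy, le_rfl⟩⟩⟩

theorem definedSet_marked_rankCode (hK : IsPairingClass K) (hS : S ⊆ K) :
    definedSet K (rankCode K M S) LSP.marked = S := by
  ext x
  constructor
  · rintro ⟨hx, h⟩
    obtain ⟨p, e, ⟨hp, hpe⟩, he⟩ := LSP.realize_marked.1 h
    have he : e.1 = ∅ :=
      (forall_mem_iff_eq hK.mem_trans e.2 hK.empty_mem).1 fun z =>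
        iff_of_false (he z) (ZFSet.notMem_empty _)
    have hpx : p.1 = {∅, x} := he ▸ (LSP.realize_unorderedPair_zModel hK).1 hpe
    change p.1 ∈ rankCode K M S at hp
    exact empty_pair_mem_rankCode.1 (hpx ▸ hp)
  · intro hx
    refine ⟨hS hx, LSP.realize_marked.2 ⟨⟨{∅, x}, hK.unorderedPair_mem hK.empty_mem (hS hx)⟩,
      ⟨∅, hK.empty_mem⟩, ⟨empty_pair_mem_rankCode.2 hx, ?_⟩, fun q => ZFSet.notMem_empty q.1⟩⟩
    exact (LSP.realize_unorderedPair_zModel hK).2 rfl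

theorem isRankCoded_rankCode (hK : IsPairingClass K) (hM : M ⊆ K)
    (hMtrans : ∀ {x y}, x ∈ y → y ∈ M → x ∈ M)
    (hcof : ∀ x ∈ K, ∃ y ∈ M, x.rank ≤ y.rank) :
    (ZModel K (rankCode K M S)).IsRankCoded where
  domain_of_mem x y hx hyx := by
    have hmem_domain (z : K) := mem_definedSet (U := rankCode K M S) (φ := LSP.domain) z
    rw [definedSet_domain_rankCode hK hM] at hmem_domain
    exact (hmem_domain y).1 (hMtrans hyx ((hmem_domain x).2 hx))
  exists_rankLE_of_mem x y z hxy hzx := by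
    obtain ⟨hy, hle⟩ := (realize_rankLE_rankCode hK).1 hxy
    obtain ⟨w, hwy, hzw⟩ := ZFSet.lt_rank_iff.1 ((ZFSet.rank_lt_of_mem hzx).trans_le hle)
    have hw := hMtrans hwy hy
    exact ⟨⟨w, hM hw⟩, hwy, (realize_rankLE_rankCode hK).2 ⟨hw, hzw⟩⟩
  exists_rankLE x := by
    obtain ⟨y, hy, hxy⟩ := hcof x.1 x.2
    exact ⟨⟨y, hM hy⟩, (realize_rankLE_rankCode hK).2 ⟨hy, hxy⟩⟩

end RankCode

namespace SetModel.IsRankCoded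

variable {A U : Set ZFSet}

theorem mem_definedSet_domain_of_mem (h : (ZModel A U).IsRankCoded)
    (hA : ∀ {x y}, x ∈ y → y ∈ A → x ∈ A) {x y : ZFSet} (hxy : x ∈ y)
    (hy : y ∈ definedSet A U LSP.domain) : x ∈ definedSet A U LSP.domain :=
  ⟨hA hxy hy.1, h.domain_of_mem ⟨y, hy.1⟩ ⟨x, _⟩ hy.2 hxy⟩

theorem rank_le_rank (h : (ZModel A U).IsRankCoded) (hA : ∀ {x y}, x ∈ y → y ∈ A → x ∈ A)
    (x : ZFSet) : ∀ (hx : x ∈ A) (y : A),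
      (ZModel A U).Realize LSP.rankLE ![⟨x, hx⟩, y] → x.rank ≤ (y : ZFSet).rank := by
  induction x using ZFSet.inductionOn with
  | _ x ih =>
    intro hx y hxy
    refine ZFSet.rank_le_iff.2 fun z hz => ?_
    obtain ⟨w, hwy, hzw⟩ := h.exists_rankLE_of_mem ⟨x, hx⟩ y ⟨z, hA hz hx⟩ hxy hz
    exact (ih z hz _ w hzw).trans_lt (ZFSet.rank_lt_of_mem hwy)

theorem exists_rank_le (h : (ZModel A U).IsRankCoded) (hA : ∀ {x y}, x ∈ y → y ∈ A → x ∈ A)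
    {x : ZFSet} (hx : x ∈ A) : ∃ y ∈ definedSet A U LSP.domain, x.rank ≤ y.rank := by
  obtain ⟨y, hxy⟩ := h.exists_rankLE ⟨x, hx⟩
  exact ⟨y.1, ⟨y.2, LSP.realize_domain.2 ⟨_, hxy⟩⟩, h.rank_le_rank hA x hx y hxy⟩

end SetModel.IsRankCoded

/-- The extension property in the definition of unfoldability, for an arbitrary class `A` in place
of `R(κ)`. -/
def Unfolds (A : Set ZFSet) : Prop :=
  ∀ S : Set ZFSet, S ⊆ A → ∀ α : Ordinal.{0},
    ∃ (N : ZFSet) (T : Set ZFSet), N.IsTransitive ∧ ZEEE A S N.toSet T ∧ α ≤ N.rank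

theorem exists_toSet_eq_of_subset {x : ZFSet} {A : Set ZFSet} (hA : A ⊆ x.toSet) :
    ∃ y : ZFSet, y.toSet = A :=
  ⟨x.sep (· ∈ A), Set.ext fun _ => ZFSet.mem_sep.trans (and_iff_right_of_imp (@hA _))⟩

theorem zEEE_of_isElem_of_rank_lt {M N : ZFSet} {S T : Set ZFSet} (hM : M.IsTransitive)
    (hMN : M.toSet ⊆ N.toSet)
    (hel : IsElem (ZModel M.toSet S) (ZModel N.toSet T) (Set.inclusion hMN))
    (hrank : M.rank < N.rank) : ZEEE M.toSet S N.toSet T := by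
  refine ⟨hMN, hel, fun a b hb => ⟨⟨b.1, hM.mem_trans hb a.2⟩, rfl⟩, fun hsurj => ?_⟩
  have hNM : N ⊆ M := fun x hx => by
    obtain ⟨y, hy⟩ := hsurj ⟨x, hx⟩
    obtain rfl : y.1 = x := congrArg Subtype.val hy
    exact y.2
  exact hrank.not_ge (ZFSet.rank_mono hNM)

theorem transitive_model_of_unfoldable_height_unfolds_general {K : Set ZFSet}
    (hK : IsPairingClass K) (hunf : Unfolds K) {M : ZFSet} (hMtrans : M.IsTransitive)
    (hMK : M.toSet ⊆ K) (hheight : ∀ x ∈ K, x.rank < M.rank) : Unfolds M.toSet := by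
  intro S hS α
  have hSK := hS.trans hMK
  obtain ⟨N', T', hN', ⟨hKN', hext⟩, hα⟩ :=
    hunf _ (rankCode_subset hK hMK hSK) (max α (Order.succ M.rank))
  have hcoded : (ZModel N'.toSet T').IsRankCoded := hext.elementary.isRankCoded <|
    isRankCoded_rankCode hK hMK hMtrans.mem_trans fun x hx => ZFSet.lt_rank_iff.1 (hheight x hx)
  obtain ⟨N, hN⟩ := exists_toSet_eq_of_subset
    (definedSet_subset : definedSet N'.toSet T' LSP.domain ⊆ N'.toSet)
  have hrank : N'.rank ≤ N.rank := ZFSet.rank_le_iff.2 fun x hx => by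
    obtain ⟨y, hy, hxy⟩ := hcoded.exists_rank_le hN'.mem_trans hx
    exact hxy.trans_lt (ZFSet.rank_lt_of_mem (hN ▸ hy : y ∈ N.toSet))
  have hNtrans : N.IsTransitive := ZFSet.isTransitive_iff_mem_trans.2 fun hxy hy => by
    have := hcoded.mem_definedSet_domain_of_mem hN'.mem_trans hxy (hN ▸ hy)
    exact (hN ▸ this : _ ∈ N.toSet)
  have hel := hext.elementary.inclusion_definedSet LSP.domain LSP.marked
  rw [definedSet_domain_rankCode hK hMK, definedSet_marked_rankCode hK hSK, ← hN] at hel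
  obtain ⟨hMN, hel⟩ := hel
  exact ⟨N, definedSet N'.toSet T' LSP.marked, hNtrans,
    zEEE_of_isElem_of_rank_lt hMtrans hMN hel
      (Order.succ_le_iff.1 ((le_max_right ..).trans (hα.trans hrank))),
    (le_max_left ..).trans (hα.trans hrank)⟩

/-- If `M` is a transitive model of ZFC of ordinal height an
unfoldable cardinal `κ`, then for every `S ⊆ M` and every ordinal `α`, `(M,∈,S)`
has a well-founded (transitive) end elementary extension of height at least `α`. -/
theorem transitive_model_of_unfoldable_height_unfolds
    (κ : Cardinal.{0}) (hκ : IsUnfoldable κ)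
    (M : ZFSet) (hMtrans : M.IsTransitive) (hZFC : SatZFC (ZModel M.toSet ∅))
    (hheight : M.rank = κ.ord)
    (S : Set ZFSet) (hS : S ⊆ M.toSet) (α : Ordinal.{0}) :
    ∃ (N : ZFSet) (T : Set ZFSet),
      N.IsTransitive ∧ ZEEE M.toSet S N.toSet T ∧ α ≤ N.rank :=
  transitive_model_of_unfoldable_height_unfolds_general
    (isPairingClass_vrank (isSuccLimit_ord hκ.1.aleph0_lt.le)) hκ.2 hMtrans
    (fun _ hx => hheight ▸ ZFSet.rank_lt_of_mem hx) (fun _ hx => hheight ▸ hx) S hS α
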